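/- arXiv:2605.28702 — 8 statements merged into one kernel-verified Lean document; each statement's English description precedes it below -/
import Mathlib

section
/- Let Λ be a finite type, q : Λ → ℝ with q λ ≥ 0 for all λ and Σ_λ q λ = 1, and let x1, y1, x1', y1', x2, y2 : Λ → Bool be value assignments. For an event E ⊆ Λ write p(E) = Σ_{λ ∈ E} q λ. If p vanishes on each of the six events {λ : x1 λ ∧ y1' λ ∧ y2 λ}, {λ : y1 λ ∧ x1' λ ∧ y2 λ}, {λ : y1 λ ∧ y1' λ ∧ x2 λ}, {λ : x1 λ ∧ ¬y1' λ ∧ ¬y2 λ}, {λ : ¬y1 λ ∧ x1' λ ∧ ¬y2 λ}, {λ : ¬y1 λ ∧ ¬y1' λ ∧ x2 λ}, then p({λ : x1 λ ∧ x1' λ ∧ x2 λ}) = 0. -/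
open Finset

/-- GNCHV Hardy zero: for any probability distribution `q` over a finite
hidden-variable set `Λ` with deterministic Boolean value assignments
`x1, y1, x1', y1', x2, y2`, if the six Hardy zero-probability events have
probability zero then the target event `x1 ∧ x1' ∧ x2` has probability zero. -/
theorem hardy_gnchv_zero
    (Λ : Type) [Fintype Λ]
    (q : Λ → ℝ) (hq0 : ∀ l, 0 ≤ q l) (hq1 : ∑ l, q l = 1)
    (x1 y1 x1' y1' x2 y2 : Λ → Bool)
    (h1 : ∑ l ∈ univ.filter (fun l => x1 l = true ∧ y1' l = true ∧ y2 l = true), q l = 0)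
    (h2 : ∑ l ∈ univ.filter (fun l => y1 l = true ∧ x1' l = true ∧ y2 l = true), q l = 0)
    (h3 : ∑ l ∈ univ.filter (fun l => y1 l = true ∧ y1' l = true ∧ x2 l = true), q l = 0)
    (h4 : ∑ l ∈ univ.filter (fun l => x1 l = true ∧ y1' l = false ∧ y2 l = false), q l = 0)
    (h5 : ∑ l ∈ univ.filter (fun l => y1 l = false ∧ x1' l = true ∧ y2 l = false), q l = 0)
    (h6 : ∑ l ∈ univ.filter (fun l => y1 l = false ∧ y1' l = false ∧ x2 l = true), q l = 0) :
    ∑ l ∈ univ.filter (fun l => x1 l = true ∧ x1' l = true ∧ x2 l = true), q l = 0 := by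
  -- Two of the three Y-values agree at every hidden variable, so one of the six events applies.
  rw [sum_eq_zero_iff_of_nonneg fun l _ => hq0 l] at h1 h2 h3 h4 h5 h6 ⊢
  simp only [mem_filter, mem_univ, true_and] at h1 h2 h3 h4 h5 h6 ⊢
  rintro l ⟨hx1, hx1', hx2⟩
  cases hy1 : y1 l <;> cases hy1' : y1' l <;> cases hy2 : y2 l <;>
    first
    | exact h1 l ⟨hx1, hy1', hy2⟩
    | exact h2 l ⟨hy1, hx1', hy2⟩
    | exact h3 l ⟨hy1, hy1', hx2⟩
    | exact h4 l ⟨hx1, hy1', hy2⟩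
    | exact h5 l ⟨hy1, hx1', hy2⟩
    | exact h6 l ⟨hy1, hy1', hx2⟩
end

section
/- Let Λ be a finite type, q : Λ → ℝ with q λ ≥ 0 for all λ, and let x1, y1, x1', y1', x2, y2 : Λ → Bool. Writing p(E) = Σ_{λ ∈ E} q λ for events E ⊆ Λ, the Hardy witness satisfies 𝒲_H := p({x1 ∧ x1' ∧ x2}) − p({x1 ∧ y1' ∧ y2}) − p({y1 ∧ x1' ∧ y2}) − p({y1 ∧ y1' ∧ x2}) − p({x1 ∧ ¬y1' ∧ ¬y2}) − p({¬y1 ∧ x1' ∧ ¬y2}) − p({¬y1 ∧ ¬y1' ∧ x2}) ≤ 0. -/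
open Finset

/-- The Hardy-type linear witness `𝒲_H` is nonpositive for every global
noncontextual hidden-variable model: with nonnegative weights `q` over a
finite hidden-variable set and deterministic Boolean value assignments,
the target-event probability minus the six Hardy exclusion-event
probabilities is at most zero. -/
theorem hardy_witness_nonpositive
    (Λ : Type) [Fintype Λ]
    (q : Λ → ℝ) (hq0 : ∀ l, 0 ≤ q l)
    (x1 y1 x1' y1' x2 y2 : Λ → Bool) :
    (∑ l ∈ univ.filter (fun l => x1 l = true ∧ x1' l = true ∧ x2 l = true), q l)
      - (∑ l ∈ univ.filter (fun l => x1 l = true ∧ y1' l = true ∧ y2 l = true), q l)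
      - (∑ l ∈ univ.filter (fun l => y1 l = true ∧ x1' l = true ∧ y2 l = true), q l)
      - (∑ l ∈ univ.filter (fun l => y1 l = true ∧ y1' l = true ∧ x2 l = true), q l)
      - (∑ l ∈ univ.filter (fun l => x1 l = true ∧ y1' l = false ∧ y2 l = false), q l)
      - (∑ l ∈ univ.filter (fun l => y1 l = false ∧ x1' l = true ∧ y2 l = false), q l)
      - (∑ l ∈ univ.filter (fun l => y1 l = false ∧ y1' l = false ∧ x2 l = true), q l)
      ≤ 0 := by
  simp only [sum_filter, ← sum_sub_distrib]
  refine sum_nonpos fun l _ => ?_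
  have hq := hq0 l
  cases x1 l <;> cases y1 l <;> cases x1' l <;> cases y1' l <;> cases x2 l <;> cases y2 l <;>
    simp <;> linarith
end

section
/- Let θ be the angle with cos θ = 5^(−1/4) and sin θ = √(1 − 1/√5) > 0, and for j ∈ ZMod 5 let v_j ∈ ℝ³ be v_j = (cos θ, sin θ·cos(4πj/5), sin θ·sin(4πj/5)). Define the 3×3 real matrices P_j = v_j v_jᵀ, B_j = 1 − 2·P_j, and D = Σ_{j=0}^{4} B_j · B_{j+1} (indices modulo 5). Then D is the diagonal matrix diag(5 − 4√5, 2√5 − 5, 2√5 − 5). -/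
/-- The KCBS five-cycle vectors
`v_j = (cos θ, sin θ·cos(4πj/5), sin θ·sin(4πj/5))`, indexed by `ZMod 5`. -/
noncomputable def kcbsVec (θ : ℝ) (j : ZMod 5) : Fin 3 → ℝ :=
  ![Real.cos θ,
    Real.sin θ * Real.cos (4 * Real.pi * (j.val : ℝ) / 5),
    Real.sin θ * Real.sin (4 * Real.pi * (j.val : ℝ) / 5)]

/-- The rank-one KCBS projections `P_j = v_j v_jᵀ`. -/
noncomputable def kcbsProj (θ : ℝ) (j : ZMod 5) : Matrix (Fin 3) (Fin 3) ℝ :=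
  Matrix.vecMulVec (kcbsVec θ j) (kcbsVec θ j)

/-- The KCBS `±1` observables `B_j = I − 2P_j`. -/
noncomputable def kcbsObs (θ : ℝ) (j : ZMod 5) : Matrix (Fin 3) (Fin 3) ℝ :=
  1 - 2 • kcbsProj θ j

open Real in
/-- Cosines of the five KCBS angles `4πj/5`. -/
lemma cos_kcbs_angle (j : ZMod 5) :
    cos (4 * π * (j.val : ℝ) / 5) =
      (![1, -(1 + √5) / 4, (√5 - 1) / 4, (√5 - 1) / 4, -(1 + √5) / 4] : Fin 5 → ℝ) j := by
  have h5 : √5 ^ 2 = (5 : ℝ) := sq_sqrt (by norm_num)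
  have hc : cos (π / 5) = (1 + √5) / 4 := cos_pi_div_five
  have hc2 : cos (2 * (π / 5)) = (√5 - 1) / 4 := by
    rw [cos_two_mul, hc]; linear_combination h5 / 8
  fin_cases j
  · change cos (4 * π * ((0 : ℕ) : ℝ) / 5) = 1
    simp
  · change cos (4 * π * ((1 : ℕ) : ℝ) / 5) = -(1 + √5) / 4
    rw [show 4 * π * ((1 : ℕ) : ℝ) / 5 = π - π / 5 by push_cast; ring, cos_pi_sub, hc]; ring
  · change cos (4 * π * ((2 : ℕ) : ℝ) / 5) = (√5 - 1) / 4
    rw [show 4 * π * ((2 : ℕ) : ℝ) / 5 = 2 * π - 2 * (π / 5) by push_cast; ring,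
      cos_two_pi_sub, hc2]
  · change cos (4 * π * ((3 : ℕ) : ℝ) / 5) = (√5 - 1) / 4
    rw [show 4 * π * ((3 : ℕ) : ℝ) / 5 = 2 * (π / 5) + 2 * π by push_cast; ring,
      cos_add_two_pi, hc2]
  · change cos (4 * π * ((4 : ℕ) : ℝ) / 5) = -(1 + √5) / 4
    rw [show 4 * π * ((4 : ℕ) : ℝ) / 5 = π / 5 + π + 2 * π by push_cast; ring,
      cos_add_two_pi, cos_add_pi, hc]; ring

open Real in
/-- Sines of the five KCBS angles `4πj/5`, as multiples of `sin (π / 5)`. -/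
lemma sin_kcbs_angle (j : ZMod 5) :
    sin (4 * π * (j.val : ℝ) / 5) = sin (π / 5) *
      (![0, 1, -(1 + √5) / 2, (1 + √5) / 2, -1] : Fin 5 → ℝ) j := by
  have hs2 : sin (2 * (π / 5)) = sin (π / 5) * ((1 + √5) / 2) := by
    rw [sin_two_mul, cos_pi_div_five]; ring
  fin_cases j
  · change sin (4 * π * ((0 : ℕ) : ℝ) / 5) = sin (π / 5) * 0
    simp
  · change sin (4 * π * ((1 : ℕ) : ℝ) / 5) = sin (π / 5) * 1
    rw [show 4 * π * ((1 : ℕ) : ℝ) / 5 = π - π / 5 by push_cast; ring, sin_pi_sub, mul_one]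
  · change sin (4 * π * ((2 : ℕ) : ℝ) / 5) = sin (π / 5) * (-(1 + √5) / 2)
    rw [show 4 * π * ((2 : ℕ) : ℝ) / 5 = 2 * π - 2 * (π / 5) by push_cast; ring,
      sin_two_pi_sub, hs2]; ring
  · change sin (4 * π * ((3 : ℕ) : ℝ) / 5) = sin (π / 5) * ((1 + √5) / 2)
    rw [show 4 * π * ((3 : ℕ) : ℝ) / 5 = 2 * (π / 5) + 2 * π by push_cast; ring,
      sin_add_two_pi, hs2]
  · change sin (4 * π * ((4 : ℕ) : ℝ) / 5) = sin (π / 5) * -1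
    rw [show 4 * π * ((4 : ℕ) : ℝ) / 5 = π / 5 + π + 2 * π by push_cast; ring,
      sin_add_two_pi, sin_add_pi]; ring

lemma sin_pi_div_five_sq : Real.sin (Real.pi / 5) ^ 2 = (5 - √5) / 8 := by
  have h5 : √5 ^ 2 = (5 : ℝ) := Real.sq_sqrt (by norm_num)
  rw [Real.sin_sq, Real.cos_pi_div_five]
  linear_combination -h5 / 16

lemma cos_sq_of_kcbs {θ : ℝ} (hcos : Real.cos θ = (5 : ℝ) ^ (-(1 / 4 : ℝ))) :
    Real.cos θ ^ 2 = √5 / 5 := by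
  have h5 : √5 * √5 = (5 : ℝ) := Real.mul_self_sqrt (by norm_num)
  have hpos : 0 < √(5 : ℝ) := by positivity
  rw [hcos, ← Real.rpow_natCast, ← Real.rpow_mul (by norm_num)]
  norm_num
  rw [Real.rpow_neg (by norm_num), ← Real.sqrt_eq_rpow]
  field_simp
  linarith

/-- The five KCBS vectors in terms of `√5` and `sin (π / 5)`. -/
lemma kcbsVec_values (θ : ℝ) :
    kcbsVec θ 0 = ![Real.cos θ, Real.sin θ * 1, Real.sin θ * (Real.sin (Real.pi / 5) * 0)] ∧
    kcbsVec θ 1 = ![Real.cos θ, Real.sin θ * (-(1 + √5) / 4),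
      Real.sin θ * (Real.sin (Real.pi / 5) * 1)] ∧
    kcbsVec θ 2 = ![Real.cos θ, Real.sin θ * ((√5 - 1) / 4),
      Real.sin θ * (Real.sin (Real.pi / 5) * (-(1 + √5) / 2))] ∧
    kcbsVec θ 3 = ![Real.cos θ, Real.sin θ * ((√5 - 1) / 4),
      Real.sin θ * (Real.sin (Real.pi / 5) * ((1 + √5) / 2))] ∧
    kcbsVec θ 4 = ![Real.cos θ, Real.sin θ * (-(1 + √5) / 4),
      Real.sin θ * (Real.sin (Real.pi / 5) * (-1))] := by
  simp only [kcbsVec, cos_kcbs_angle, sin_kcbs_angle]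
  exact ⟨rfl, rfl, rfl, rfl, rfl⟩

/-- Cyclically adjacent KCBS vectors are orthogonal. -/
lemma kcbsVec_dotProduct_succ {θ : ℝ} (hθ : Real.cos θ ^ 2 = √5 / 5) (j : ZMod 5) :
    kcbsVec θ j ⬝ᵥ kcbsVec θ (j + 1) = 0 := by
  have h5 : √5 ^ 2 = (5 : ℝ) := Real.sq_sqrt (by norm_num)
  have hs : Real.sin θ ^ 2 = 1 - √5 / 5 := by rw [Real.sin_sq, hθ]
  have ht := sin_pi_div_five_sq
  obtain ⟨h0, h1, h2, h3, h4⟩ := kcbsVec_values θ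
  have hj : j = 0 ∨ j = 1 ∨ j = 2 ∨ j = 3 ∨ j = 4 := by decide +revert
  have e1 : (1 + 1 : ZMod 5) = 2 := rfl
  have e2 : (2 + 1 : ZMod 5) = 3 := rfl
  have e3 : (3 + 1 : ZMod 5) = 4 := rfl
  have e4 : (4 + 1 : ZMod 5) = 0 := rfl
  rcases hj with rfl | rfl | rfl | rfl | rfl <;>
    simp [zero_add, e1, e2, e3, e4, h0, h1, h2, h3, h4, dotProduct, Fin.sum_univ_three] <;>
    grind

lemma kcbsProj_mul_succ {θ : ℝ} (hθ : Real.cos θ ^ 2 = √5 / 5) (j : ZMod 5) :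
    kcbsProj θ j * kcbsProj θ (j + 1) = 0 := by
  rw [kcbsProj, kcbsProj, Matrix.vecMulVec_mul_vecMulVec, kcbsVec_dotProduct_succ hθ]
  simp

lemma sum_kcbsProj {θ : ℝ} (hθ : Real.cos θ ^ 2 = √5 / 5) :
    ∑ j : ZMod 5, kcbsProj θ j = Matrix.diagonal ![√5, (5 - √5) / 2, (5 - √5) / 2] := by
  have h5 : √5 ^ 2 = (5 : ℝ) := Real.sq_sqrt (by norm_num)
  have hs : Real.sin θ ^ 2 = 1 - √5 / 5 := by rw [Real.sin_sq, hθ]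
  have ht := sin_pi_div_five_sq
  have hsum (f : ZMod 5 → ℝ) : ∑ j, f j = f 0 + f 1 + f 2 + f 3 + f 4 :=
    Fin.sum_univ_five f
  ext a b
  rw [Matrix.sum_apply, hsum]
  obtain ⟨h0, h1, h2, h3, h4⟩ := kcbsVec_values θ
  simp only [kcbsProj, Matrix.vecMulVec_apply, h0, h1, h2, h3, h4]
  fin_cases a <;> fin_cases b <;> simp <;> grind

/-- The KCBS sum operator `D = Σ_j B_j B_{j+1}` is the diagonal matrix
`diag(5 − 4√5, 2√5 − 5, 2√5 − 5)`. -/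
theorem kcbs_sum_operator_diag (θ : ℝ)
    (hcos : Real.cos θ = (5 : ℝ) ^ (-(1 / 4 : ℝ)))
    (hsin : Real.sin θ = Real.sqrt (1 - 1 / Real.sqrt 5)) :
    (∑ j : ZMod 5, kcbsObs θ j * kcbsObs θ (j + 1))
      = Matrix.diagonal
          ![5 - 4 * Real.sqrt 5, 2 * Real.sqrt 5 - 5, 2 * Real.sqrt 5 - 5] := by
  have hθ := cos_sq_of_kcbs hcos
  have hterm (j : ZMod 5) : kcbsObs θ j * kcbsObs θ (j + 1)
      = 1 - 2 • kcbsProj θ j - 2 • kcbsProj θ (j + 1) := by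
    have h := kcbsProj_mul_succ hθ j
    simp only [kcbsObs, sub_mul, mul_sub, one_mul, mul_one, smul_mul_smul_comm, h, smul_zero,
      sub_zero]
  have hshift : ∑ j : ZMod 5, kcbsProj θ (j + 1) = ∑ j : ZMod 5, kcbsProj θ j :=
    Equiv.sum_comp (Equiv.addRight (1 : ZMod 5)) (kcbsProj θ)
  simp only [hterm, Finset.sum_sub_distrib, ← Finset.smul_sum, hshift, sum_kcbsProj hθ]
  ext a b
  fin_cases a <;> fin_cases b <;> simp [Matrix.ofNat_apply] <;> ring
end

section
/- Let b : ZMod 5 → ℤ and γ : ZMod 5 → ℤ be functions with b j ∈ {−1, 1} and γ j ∈ {−1, 1} for every j, and assume Π_{j=0}^{4} γ j = 1. Then Σ_{j=0}^{4} γ j · b j · b (j+1) ≥ −3. -/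
/-- An odd number of signs with product `1` includes at least one `1`, so their sum is at least
`2` minus their number. -/
theorem two_sub_card_le_sum_of_prod_eq_one {ι : Type*} [Fintype ι] (hodd : Odd (Fintype.card ι))
    (x : ι → ℤ) (hx : ∀ i, x i = -1 ∨ x i = 1) (hprod : ∏ i, x i = 1) :
    2 - (Fintype.card ι : ℤ) ≤ ∑ i, x i := by
  classical
  obtain ⟨i, hi⟩ : ∃ i, x i = 1 := by
    by_contra! h
    have hneg : ∀ i, x i = -1 := fun i => (hx i).resolve_right (h i)
    simp [hneg, hodd.neg_one_pow] at hprod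
  have hle : ∀ j, -1 ≤ x j := fun j => by rcases hx j with h | h <;> simp [h]
  have hsingle : x i + 1 ≤ ∑ j, (x j + 1) :=
    Finset.single_le_sum (f := fun j => x j + 1) (fun j _ => by linarith [hle j])
      (Finset.mem_univ i)
  simp only [Finset.sum_add_distrib, Finset.sum_const, Finset.card_univ, nsmul_eq_mul,
    mul_one] at hsingle
  linarith

/-- Tight correlator facets of the `n = 5` cycle noncontextuality polytope:
for signs `γ_j = ±1` with `Π_j γ_j = 1`, every deterministic `±1` assignment
`b` satisfies `Σ_j γ_j·b_j·b_{j+1} ≥ −3`. -/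
theorem five_cycle_facets (b γ : ZMod 5 → ℤ)
    (hb : ∀ j, b j = -1 ∨ b j = 1)
    (hγ : ∀ j, γ j = -1 ∨ γ j = 1)
    (hprod : ∏ j : ZMod 5, γ j = 1) :
    -3 ≤ ∑ j : ZMod 5, γ j * b j * b (j + 1) := by
  have hcard : Fintype.card (ZMod 5) = 5 := ZMod.card 5
  have hshift : ∏ j : ZMod 5, b (j + 1) = ∏ j, b j := Equiv.prod_comp (Equiv.addRight 1) b
  have hterm : ∏ j : ZMod 5, γ j * b j * b (j + 1) = 1 := by
    rw [Finset.prod_mul_distrib, Finset.prod_mul_distrib, hprod, hshift, one_mul,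
      ← Finset.prod_mul_distrib]
    exact Finset.prod_eq_one fun j _ => by rcases hb j with h | h <;> simp [h]
  have hsign : ∀ j, γ j * b j * b (j + 1) = -1 ∨ γ j * b j * b (j + 1) = 1 := fun j => by
    rcases hγ j with h₁ | h₁ <;> rcases hb j with h₂ | h₂ <;>
      rcases hb (j + 1) with h₃ | h₃ <;> simp [h₁, h₂, h₃]
  have h := two_sub_card_le_sum_of_prod_eq_one (by rw [hcard]; decide) _ hsign hterm
  rw [hcard] at h
  norm_num at h
  exact h
end

section
/- Let Λ be a finite type, q : Λ → ℝ with q λ ≥ 0 and Σ_λ q λ = 1, and let A1, A2, B, C : Λ → ℤ be functions with values in {−1, 1}. Then Σ_λ q λ · (A1 λ · B λ + A1 λ · C λ + A2 λ · B λ − A2 λ · C λ) ≥ −2. -/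
/-- Generalized-Bell (CHSH-type) lower bound: for any hidden-variable
distribution `q` over a finite set `Λ` and deterministic `±1` assignments
`A1, A2, B, C`, one has `⟨A1B⟩ + ⟨A1C⟩ + ⟨A2B⟩ − ⟨A2C⟩ ≥ −2`. -/
theorem chsh_type_lower_bound
    (Λ : Type) [Fintype Λ]
    (q : Λ → ℝ) (hq0 : ∀ l, 0 ≤ q l) (hq1 : ∑ l, q l = 1)
    (A1 A2 B C : Λ → ℤ)
    (hA1 : ∀ l, A1 l = -1 ∨ A1 l = 1)
    (hA2 : ∀ l, A2 l = -1 ∨ A2 l = 1)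
    (hB : ∀ l, B l = -1 ∨ B l = 1)
    (hC : ∀ l, C l = -1 ∨ C l = 1) :
    -2 ≤ ∑ l, q l * ((A1 l * B l : ℤ) + A1 l * C l + A2 l * B l - A2 l * C l) := by
  calc (-2 : ℝ) = ∑ l, q l * (-2) := by rw [← Finset.sum_mul, hq1, one_mul]
    _ ≤ _ := Finset.sum_le_sum fun l _ => mul_le_mul_of_nonneg_left ?_ (hq0 l)
  rcases hA1 l with h1 | h1 <;> rcases hA2 l with h2 | h2 <;>
    rcases hB l with h3 | h3 <;> rcases hC l with h4 | h4 <;>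
    norm_num [h1, h2, h3, h4]
end

section
/- Let V be the 9×9 swap matrix on ℂ³ ⊗ ℂ³, P₋ = (I₉ − V)/2, ρ_W = (1/2)·(P₋/3) + (1/2)·(I₉/9), E the projector onto |00⟩, and ρ = (1/2)·E + (1/2)·ρ_W. Let ρ^{T_B} be the partial transpose on the second factor, ρ^{T_B}((m,k),(n,l)) = ρ((m,l),(n,k)). Then (37 − 3√177)/144 is an eigenvalue of ρ^{T_B}, this number is negative, and consequently ρ^{T_B} is not positive semidefinite (so ρ is NPT, hence entangled). -/
open scoped ComplexOrder

/-- The swap matrix `V` on `ℂ³ ⊗ ℂ³` (`V·(x⊗y) = y⊗x`). -/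
def swapMat : Matrix (Fin 3 × Fin 3) (Fin 3 × Fin 3) ℂ :=
  fun p q => if p.1 = q.2 ∧ p.2 = q.1 then 1 else 0

/-- The antisymmetric projector `P₋ = (I₉ − V)/2`. -/
noncomputable def Pminus : Matrix (Fin 3 × Fin 3) (Fin 3 × Fin 3) ℂ :=
  (1 / 2 : ℂ) • ((1 : Matrix (Fin 3 × Fin 3) (Fin 3 × Fin 3) ℂ) - swapMat)

/-- The qutrit Werner state `ρ_W = (1/2)·(P₋/3) + (1/2)·(I₉/9)` at `w = 1/2`. -/
noncomputable def rhoWerner : Matrix (Fin 3 × Fin 3) (Fin 3 × Fin 3) ℂ :=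
  (1 / 2 : ℂ) • ((1 / 3 : ℂ) • Pminus)
    + (1 / 2 : ℂ) • ((1 / 9 : ℂ) • (1 : Matrix (Fin 3 × Fin 3) (Fin 3 × Fin 3) ℂ))

/-- The projector `E` onto `|00⟩`. -/
def flagProj : Matrix (Fin 3 × Fin 3) (Fin 3 × Fin 3) ℂ :=
  fun p q => if p = ((0 : Fin 3), (0 : Fin 3)) ∧ q = ((0 : Fin 3), (0 : Fin 3)) then 1 else 0

/-- The flagged qutrit Werner-local state `ρ = (1/2)·E + (1/2)·ρ_W`. -/
noncomputable def rhoFlagged : Matrix (Fin 3 × Fin 3) (Fin 3 × Fin 3) ℂ :=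
  (1 / 2 : ℂ) • flagProj + (1 / 2 : ℂ) • rhoWerner

/-- The partial transpose of `ρ` on the second (Bob) factor:
`ρ^{T_B}((m,k),(n,l)) = ρ((m,l),(n,k))`. -/
noncomputable def rhoFlaggedPT : Matrix (Fin 3 × Fin 3) (Fin 3 × Fin 3) ℂ :=
  fun p q => rhoFlagged (p.1, q.2) (q.1, p.2)

/-- A matrix with a negative real eigenvalue is not positive semidefinite. -/
theorem Matrix.not_posSemidef_of_mulVec_eq_neg_smul {n : Type*} [Fintype n]
    {A : Matrix n n ℂ} {v : n → ℂ} {μ : ℝ} (hv : v ≠ 0)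
    (hA : A.mulVec v = (μ : ℂ) • v) (hμ : μ < 0) : ¬ A.PosSemidef := by
  intro h
  have hquad := h.dotProduct_mulVec_nonneg v
  rw [hA, dotProduct_smul, smul_eq_mul] at hquad
  have hpos : 0 < star v ⬝ᵥ v := dotProduct_star_self_pos_iff.mpr hv
  exact absurd hquad (mul_neg_of_neg_of_pos (by exact_mod_cast hμ) hpos).not_ge

/-- An unnormalized eigenvector `(√177 − 13)|00⟩ + 2|11⟩ + 2|22⟩` of the partial transpose. -/
noncomputable def negEigenvector : Fin 3 × Fin 3 → ℂ :=
  fun p => if p = (0, 0) then ((Real.sqrt 177 - 13 : ℝ) : ℂ) else if p.1 = p.2 then 2 else 0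

theorem negEigenvector_ne_zero : negEigenvector ≠ 0 := by
  intro h
  simpa [negEigenvector] using congrFun h (1, 1)

theorem rhoFlaggedPT_mulVec_negEigenvector :
    rhoFlaggedPT.mulVec negEigenvector
      = (((37 - 3 * Real.sqrt 177) / 144 : ℝ) : ℂ) • negEigenvector := by
  have hsq : ((Real.sqrt 177 : ℝ) : ℂ) ^ 2 = 177 := by
    exact_mod_cast Real.sq_sqrt (show (0 : ℝ) ≤ 177 by norm_num)
  ext ⟨i, j⟩
  fin_cases i <;> fin_cases j <;>
    simp [Matrix.mulVec, dotProduct, Fintype.sum_prod_type, Fin.sum_univ_three, negEigenvector,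
      rhoFlaggedPT, rhoFlagged, rhoWerner, Pminus, swapMat, flagProj, Matrix.one_apply] <;>
    grind

theorem negEigenvalue_neg : ((37 - 3 * Real.sqrt 177) / 144 : ℝ) < 0 := by
  have h : (37 / 3 : ℝ) < Real.sqrt 177 := Real.lt_sqrt_of_sq_lt (by norm_num)
  linarith

/-- The flagged qutrit Werner-local state is NPT: `(37 − 3√177)/144` is a
negative eigenvalue of the partial transpose, which is therefore not positive
semidefinite; hence `ρ` is entangled. -/
theorem rhoFlagged_NPT :
    (∃ v : Fin 3 × Fin 3 → ℂ, v ≠ 0 ∧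
        rhoFlaggedPT.mulVec v
          = (((37 - 3 * Real.sqrt 177) / 144 : ℝ) : ℂ) • v) ∧
      ((37 - 3 * Real.sqrt 177) / 144 : ℝ) < 0 ∧
      ¬ rhoFlaggedPT.PosSemidef := by
  exact ⟨⟨negEigenvector, negEigenvector_ne_zero, rhoFlaggedPT_mulVec_negEigenvector⟩,
    negEigenvalue_neg,
    Matrix.not_posSemidef_of_mulVec_eq_neg_smul negEigenvector_ne_zero
      rhoFlaggedPT_mulVec_negEigenvector negEigenvalue_neg⟩
end

section
/- Let n be a natural number and for each party i ∈ Fin n let M_i be a finite set of measurements, each measurement j having a finite outcome set O_j, and let 𝒞_i be a finite family of local contexts (finite subsets of M_i); let 𝒞 ⊆ 𝒞_1 × ⋯ × 𝒞_n be the tested family of multipartite contexts, and let p_C be an empirical probability assignment giving, for each C = (C_1,…,C_n) ∈ 𝒞, a probability distribution over joint outcome tuples (m_{ij})_{i, j ∈ C_i}. Suppose (GLHV): there is a finite type Λ, weights q : Λ → ℝ with q λ ≥ 0 and Σ_λ q λ = 1, and for each i, each C_i and each λ a probability distribution p_i(·|C_i,λ) over outcome tuples of C_i, such that p_C((m_{ij}))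 = Σ_λ q λ · Π_i p_i((m_{ij})_{j∈C_i} | C_i, λ) for every C ∈ 𝒞. Suppose further (conditional NCHV refinement): for each i and λ there are a finite type Σ_i, weights q_{i,λ} : Σ_i → ℝ with q_{i,λ} σ ≥ 0 and Σ_σ q_{i,λ} σ = 1, and context-independent responses p_i(m | j, σ, λ) (probability distributions over O_j for each j ∈ M_i), such that p_i((m_{ij})_{j∈C_i} | C_i, λ) = Σ_σ q_{i,λ}(σ) · Π_{j∈C_i} p_i(m_{ij} | j, σ, λ) for every C_i ∈ 𝒞_i. Then there exist a finite type Ξ, weights Q : Ξ → ℝ with Q ξ ≥ 0 and Σ_ξ Q ξ = 1, and context-independent responses r(m | i, j, ξ) such that p_C((m_{ij})) = Σ_ξ Q ξ · Π_i Π_{j∈C_i} r(m_{ij} | i, j, ξ) for every C ∈ 𝒞; that is, the empirical model admits a global noncontextual hidden-variable (GNCHV) model. -/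
/-- Classical composition lemma: a GLHV model on the tested family `T` of
multipartite contexts whose block responses all admit conditional
local-noncontextual refinements glues to a single global noncontextual
hidden-variable (GNCHV) model.  Finite hidden-variable types are represented
as `Fin k`. -/
theorem glhv_composition_to_gnchv
    (n : ℕ)
    (M : Fin n → Type) [∀ i, Fintype (M i)] [∀ i, DecidableEq (M i)]
    (O : (i : Fin n) → M i → Type) [∀ i j, Fintype (O i j)]
    (Ctx : ∀ i, Finset (Finset (M i)))
    (T : Set (∀ i, Finset (M i)))
    (hT : ∀ C ∈ T, ∀ i, C i ∈ Ctx i)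
    -- the empirical model: a probability distribution over joint outcome
    -- tuples for each tested multipartite context
    (p : (C : ∀ i, Finset (M i)) → (∀ i, (j : ↥(C i)) → O i j.1) → ℝ)
    (hp0 : ∀ C ∈ T, ∀ m, 0 ≤ p C m)
    (hp1 : ∀ C ∈ T, ∑ m : ∀ i, (j : ↥(C i)) → O i j.1, p C m = 1)
    -- (GLHV) one shared hidden variable with block responses per local context
    (Λ : Type) [Fintype Λ]
    (q : Λ → ℝ) (hq0 : ∀ l, 0 ≤ q l) (hq1 : ∑ l, q l = 1)
    (pb : (i : Fin n) → (Ci : Finset (M i)) → Λ → ((j : ↥Ci) → O i j.1) → ℝ)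
    (hpb0 : ∀ (i : Fin n) (Ci : Finset (M i)) (l : Λ) m, 0 ≤ pb i Ci l m)
    (hpb1 : ∀ (i : Fin n) (Ci : Finset (M i)) (l : Λ),
      ∑ m : (j : ↥Ci) → O i j.1, pb i Ci l m = 1)
    (hGLHV : ∀ C ∈ T, ∀ m : ∀ i, (j : ↥(C i)) → O i j.1,
      p C m = ∑ l, q l * ∏ i, pb i (C i) l (m i))
    -- (conditional NCHV refinement) each block response factorizes through a
    -- further finite hidden variable with context-independent responses
    (hRef : ∀ (i : Fin n) (l : Λ),
      ∃ (s : ℕ) (qs : Fin s → ℝ),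
        (∀ σ, 0 ≤ qs σ) ∧ (∑ σ, qs σ = 1) ∧
        ∃ r : (j : M i) → Fin s → O i j → ℝ,
          (∀ j σ m, 0 ≤ r j σ m) ∧ (∀ j σ, ∑ m, r j σ m = 1) ∧
          ∀ Ci ∈ Ctx i, ∀ m : (j : ↥Ci) → O i j.1,
            pb i Ci l m = ∑ σ, qs σ * ∏ j : ↥Ci, r j.1 σ (m j)) :
    -- (GNCHV) conclusion: one hidden variable with context-independent
    -- per-measurement responses reproducing every tested context
    ∃ (K : ℕ) (Q : Fin K → ℝ),
      (∀ x, 0 ≤ Q x) ∧ (∑ x, Q x = 1) ∧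
      ∃ R : (i : Fin n) → (j : M i) → Fin K → O i j → ℝ,
        (∀ i j x m, 0 ≤ R i j x m) ∧ (∀ i j x, ∑ m, R i j x m = 1) ∧
        ∀ C ∈ T, ∀ m : ∀ i, (j : ↥(C i)) → O i j.1,
          p C m = ∑ x, Q x * ∏ i, ∏ j : ↥(C i), R i j.1 x (m i j) := by
  choose s w hw0 hw1 r hr0 hr1 hr using hRef
  -- The glued hidden variable: the shared one together with every party's refinement variable.
  let Ξ := (l : Λ) × (∀ i, Fin (s i l))
  let e : Ξ ≃ Fin (Fintype.card Ξ) := Fintype.equivFin Ξ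
  let Q : Ξ → ℝ := fun ξ => q ξ.1 * ∏ i, w i ξ.1 (ξ.2 i)
  refine ⟨Fintype.card Ξ, fun x => Q (e.symm x), fun x => ?_, ?_,
    fun i j x => r i (e.symm x).1 j ((e.symm x).2 i),
    fun i j x => hr0 i _ j _, fun i j x => hr1 i _ j _, fun C hC m => ?_⟩
  · exact mul_nonneg (hq0 _) (Finset.prod_nonneg fun i _ => hw0 i _ _)
  · rw [Equiv.sum_comp e.symm Q, Fintype.sum_sigma]
    simp only [Q, ← Finset.mul_sum, ← Fintype.prod_sum, hw1, Finset.prod_const_one, mul_one, hq1]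
  · rw [Equiv.sum_comp e.symm fun ξ : Ξ =>
        Q ξ * ∏ i, ∏ j : ↥(C i), r i ξ.1 j.1 (ξ.2 i) (m i j),
      Fintype.sum_sigma, hGLHV C hC m]
    refine Finset.sum_congr rfl fun l _ => ?_
    simp only [Q, mul_assoc, ← Finset.prod_mul_distrib, ← Finset.mul_sum]
    congr 1
    simp only [hr _ l _ (hT C hC _)]
    exact Fintype.prod_sum fun i σ => w i l σ * ∏ j : ↥(C i), r i l j.1 σ (m i j)
end

section
/- Let n be a natural number and for each i ∈ Fin n let d_i be a positive dimension. Let ρ be a complex matrix indexed by (Π i, Fin (d_i)) × (Π i, Fin (d_i)) that is separable across the parties: there are a finite type I, weights r : I → ℝ with r μ ≥ 0 and Σ_μ r μ = 1, and for each μ and i a matrix ρ_i^μ on Fin (d_i), such that ρ(k, l) = Σ_μ r μ · Π_i ρ_i^μ(k i, l i) for all k, l. For each party i let M_i be a finite set of measurements, each j ∈ M_i having a finite outcome set O_j and matrices E_i(j, m) on Fin (d_i) (one per outcome m ∈ O_j), let 𝒞_i be a finite family of local contexts C_i ⊆ M_i whose members' matrices pairwise commute within each context, and for a context C_i and outcomes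 (m_j)_{j∈C_i} let E_i(C_i, (m_j)) = Π_{j∈C_i} E_i(j, m_j). Assume that for every μ and every i the local state ρ_i^μ admits an NCHV-local model: there are a finite type Λ, weights q : Λ → ℝ with q λ ≥ 0 and Σ_λ q λ = 1, and responses p_i^μ(m | j, λ) ≥ 0 with Σ_m p_i^μ(m | j, λ) = 1, such that Tr(ρ_i^μ · E_i(C_i, (m_j))) = Σ_λ q λ · Π_{j∈C_i} p_i^μ(m_j | j, λ) for every C_i ∈ 𝒞_i and all outcomes. Then the composite statistics admit a GNCHV model: there exist a finite type Ξ, weights Q : Ξ → ℝ with Q ξ ≥ 0 and Σ_ξ Q ξ = 1, and context-independent responses P(m | i, j, ξ), such that for every multipartite context C = (C_1,…,C_n) ∈ 𝒞_1 × ⋯ × 𝒞_n and all outcomes, Tr(ρ · E(C, (m_{ij}))) = Σ_ξ Q ξ · Π_i Π_{j∈C_i} P(m_{ij} | i, j, ξ), where E(C, (m_{ij})) is the matrix with entries E(C,(m_{ij}))(k,l) = Π_i E_i(C_i, (m_{ij})_{j∈C_i})(k i, l i) (the tensor product of the local context effects). -/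
/-- The joint effect of a compatible local context: the product
`Π_{j∈C_i} E_i(j, m_j)` of the (pairwise commuting) outcome effects of the
measurements in the context. -/
noncomputable def ctxEffect {d : ℕ} {Mi : Type} [DecidableEq Mi] {O : Mi → Type}
    (Eff : (j : Mi) → O j → Matrix (Fin d) (Fin d) ℂ)
    (Ci : Finset Mi) (m : (j : ↥Ci) → O j.1)
    (hcomm : ∀ j ∈ Ci, ∀ j' ∈ Ci, ∀ a b, Commute (Eff j a) (Eff j' b)) :
    Matrix (Fin d) (Fin d) ℂ :=
  Ci.attach.noncommProd (fun j => Eff j.1 (m j))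
    (fun a _ b _ _ => hcomm a.1 a.2 b.1 b.2 _ _)

/-- The trace of a product of two tensor products of matrices is the product of the local traces. -/
theorem trace_piTensor_mul {ι R : Type*} [Fintype ι] [DecidableEq ι] [CommSemiring R]
    {κ : ι → Type*} [∀ i, Fintype (κ i)] (A B : ∀ i, Matrix (κ i) (κ i) R) :
    Matrix.trace (Matrix.of (fun k l : ∀ i, κ i => ∏ i, A i (k i) (l i)) *
        Matrix.of (fun k l : ∀ i, κ i => ∏ i, B i (k i) (l i)))
      = ∏ i, Matrix.trace (A i * B i) := by
  simp only [Matrix.trace, Matrix.diag_apply, Matrix.mul_apply, Matrix.of_apply,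
    Fintype.prod_sum, Finset.prod_mul_distrib]

/-- The separable decomposition of a state carries over to its statistics on product effects. -/
theorem trace_separable_mul {ι R I : Type*} [Fintype ι] [DecidableEq ι] [CommSemiring R]
    [Fintype I] {κ : ι → Type*} [∀ i, Fintype (κ i)] (ρ : Matrix (∀ i, κ i) (∀ i, κ i) R)
    (r : I → R) (A : I → ∀ i, Matrix (κ i) (κ i) R)
    (hρ : ∀ k l, ρ k l = ∑ μ, r μ * ∏ i, A μ i (k i) (l i)) (B : ∀ i, Matrix (κ i) (κ i) R) :
    Matrix.trace (ρ * Matrix.of (fun k l : ∀ i, κ i => ∏ i, B i (k i) (l i)))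
      = ∑ μ, r μ * ∏ i, Matrix.trace (A μ i * B i) := by
  have hsum : ρ = ∑ μ, r μ • Matrix.of (fun k l : ∀ i, κ i => ∏ i, A μ i (k i) (l i)) := by
    ext k l
    simp [hρ, Matrix.sum_apply]
  simp only [hsum, Finset.sum_mul, Matrix.trace_sum, Matrix.smul_mul, Matrix.trace_smul,
    trace_piTensor_mul, smul_eq_mul]

/-- Separable reduction: if the multipartite state is separable across the
parties, `ρ = Σ_μ r_μ ρ_1^μ ⊗ ⋯ ⊗ ρ_n^μ` (tensor products encoded entrywise),
and every local component `ρ_i^μ` admits an NCHV-local model for party `i`'s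
measurement scenario, then the composite statistics on all multipartite
contexts admit a global noncontextual hidden-variable (GNCHV) model. -/
theorem separable_reduction
    (n : ℕ) (d : Fin n → ℕ) (hd : ∀ i, 0 < d i)
    (ρ : Matrix (∀ i, Fin (d i)) (∀ i, Fin (d i)) ℂ)
    (I : Type) [Fintype I]
    (r : I → ℝ) (hr0 : ∀ μ, 0 ≤ r μ) (hr1 : ∑ μ, r μ = 1)
    (ρloc : I → (i : Fin n) → Matrix (Fin (d i)) (Fin (d i)) ℂ)
    (hsep : ∀ k l, ρ k l = ∑ μ, (r μ : ℂ) * ∏ i, ρloc μ i (k i) (l i))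
    (M : Fin n → Type) [∀ i, Fintype (M i)] [∀ i, DecidableEq (M i)]
    (O : (i : Fin n) → M i → Type) [∀ i j, Fintype (O i j)]
    (Eff : (i : Fin n) → (j : M i) → O i j → Matrix (Fin (d i)) (Fin (d i)) ℂ)
    (Ctx : ∀ i, Finset (Finset (M i)))
    -- measurements within each local context pairwise commute
    (hcomm : ∀ (i : Fin n), ∀ Ci ∈ Ctx i, ∀ j ∈ Ci, ∀ j' ∈ Ci, ∀ a b,
      Commute (Eff i j a) (Eff i j' b))
    -- every local component state admits an NCHV-local model
    (hNCHV : ∀ (μ : I) (i : Fin n),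
      ∃ (L : ℕ) (q : Fin L → ℝ),
        (∀ l, 0 ≤ q l) ∧ (∑ l, q l = 1) ∧
        ∃ pr : (j : M i) → Fin L → O i j → ℝ,
          (∀ j l m, 0 ≤ pr j l m) ∧ (∀ j l, ∑ m, pr j l m = 1) ∧
          ∀ (Ci : Finset (M i)) (hCi : Ci ∈ Ctx i), ∀ m : (j : ↥Ci) → O i j.1,
            Matrix.trace (ρloc μ i * ctxEffect (Eff i) Ci m (hcomm i Ci hCi))
              = ((∑ l, q l * ∏ j : ↥Ci, pr j.1 l (m j) : ℝ) : ℂ)) :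
    -- GNCHV conclusion for the composite statistics
    ∃ (K : ℕ) (Q : Fin K → ℝ),
      (∀ x, 0 ≤ Q x) ∧ (∑ x, Q x = 1) ∧
      ∃ P : (i : Fin n) → (j : M i) → Fin K → O i j → ℝ,
        (∀ i j x m, 0 ≤ P i j x m) ∧ (∀ i j x, ∑ m, P i j x m = 1) ∧
        ∀ (C : ∀ i, Finset (M i)) (hC : ∀ i, C i ∈ Ctx i),
          ∀ m : ∀ i, (j : ↥(C i)) → O i j.1,
            Matrix.trace (ρ * Matrix.of (fun k l =>
                ∏ i, ctxEffect (Eff i) (C i) (m i) (hcomm i (C i) (hC i)) (k i) (l i)))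
              = ((∑ x, Q x * ∏ i, ∏ j : ↥(C i), P i j.1 x (m i j) : ℝ) : ℂ) := by
  classical
  choose L q hq0 hq1 pr hpr0 hpr1 hpr using hNCHV
  -- the hidden variable `(μ, λ_1, …, λ_n)`
  let e := Fintype.equivFin (Σ μ : I, ∀ i, Fin (L μ i))
  refine ⟨_, fun x => r (e.symm x).1 * ∏ i, q (e.symm x).1 i ((e.symm x).2 i),
    fun x => mul_nonneg (hr0 _) (Finset.prod_nonneg fun i _ => hq0 _ _ _), ?_,
    fun i j x => pr (e.symm x).1 i j ((e.symm x).2 i),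
    fun i j x m => hpr0 _ _ _ _ _, fun i j x => hpr1 _ _ _ _, fun C hC m => ?_⟩
  · rw [e.symm.sum_comp (fun ξ : Σ μ : I, ∀ i, Fin (L μ i) => r ξ.1 * ∏ i, q ξ.1 i (ξ.2 i)),
      Fintype.sum_sigma]
    simp only [← Finset.mul_sum, ← Fintype.prod_sum, hq1, Finset.prod_const_one, mul_one, hr1]
  · rw [e.symm.sum_comp (fun ξ : Σ μ : I, ∀ i, Fin (L μ i) =>
        (r ξ.1 * ∏ i, q ξ.1 i (ξ.2 i)) * ∏ i, ∏ j : ↥(C i), pr ξ.1 i j.1 (ξ.2 i) (m i j)),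
      Fintype.sum_sigma, trace_separable_mul ρ _ ρloc hsep]
    simp only [hpr _ _ _ (hC _), mul_assoc, ← Finset.mul_sum, ← Finset.prod_mul_distrib,
      Fintype.prod_sum, Complex.ofReal_sum, Complex.ofReal_mul, Complex.ofReal_prod]
end
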